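/- Let (G,∘,e) be a group with braiding operator r, written r(x,y) = (σ_x(y), γ_y(x)) with each σ_x bijective, and let (F,Φ,Ψ) be a Drinfeld twist on (G,∘,e,r). Let ∘' := m∘F⁻¹ be the twisted multiplication and r' := F∘r∘F⁻¹ the twisted braiding operator, written r'(x,y) = (σ'_x(y), γ'_y(x)), and suppose each σ'_x is bijective. Then the additive groups (G,⋆), where x ⋆ y := x∘σ_x⁻¹(y), and (G,⋆'), where x ⋆' y := x∘'σ'_x⁻¹(y), are isomorphic: there exists a bijection f : G → G with f(x⋆y) = f(x) ⋆' f(y) for all x,y ∈ G. -/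

import Mathlib

namespace BraceTwist

/-- Apply a map on `G × G` to the factors 1,2 of a triple: `f₁₂ = f × id`. -/
def E12 {G : Type*} (f : (G × G) ≃ (G × G)) : (G × G × G) ≃ (G × G × G) :=
  ((Equiv.prodAssoc G G G).symm.trans (f.prodCongr (Equiv.refl G))).trans
    (Equiv.prodAssoc G G G)

/-- Apply a map on `G × G` to the factors 2,3 of a triple: `f₂₃ = id × f`. -/
def E23 {G : Type*} (f : (G × G) ≃ (G × G)) : (G × G × G) ≃ (G × G × G) :=
  (Equiv.refl G).prodCongr f

/-- `m₁₂ : G³ → G²`, multiplying the first two factors. -/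
def M12 {G : Type*} (mul : G → G → G) : G × G × G → G × G :=
  fun p => (mul p.1 p.2.1, p.2.2)

/-- `m₂₃ : G³ → G²`, multiplying the last two factors. -/
def M23 {G : Type*} (mul : G → G → G) : G × G × G → G × G :=
  fun p => (p.1, mul p.2.1 p.2.2)

/-- `(mul, e, inv)` is a group structure on `G`. -/
structure IsGroup {G : Type*} (mul : G → G → G) (e : G) (inv : G → G) : Prop where
  mul_assoc : ∀ a b c, mul (mul a b) c = mul a (mul b c)
  one_mul : ∀ a, mul e a = a
  mul_one : ∀ a, mul a e = a
  inv_mul : ∀ a, mul (inv a) a = e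
  mul_inv : ∀ a, mul a (inv a) = e

/-- `r` is a braiding operator on the group `(G, mul, e)`. -/
structure IsBraidingOp {G : Type*} (mul : G → G → G) (e : G)
    (r : (G × G) ≃ (G × G)) : Prop where
  unit_left : ∀ g, r (e, g) = (g, e)
  unit_right : ∀ g, r (g, e) = (e, g)
  br1 : ∀ p : G × G × G, r (M12 mul p) = M23 mul (E12 r (E23 r p))
  br2 : ∀ p : G × G × G, r (M23 mul p) = M12 mul (E23 r (E12 r p))
  mul_r : ∀ p : G × G, mul (r p).1 (r p).2 = mul p.1 p.2

/-- A Drinfeld twist `(F, Φ, Ψ)` on the group with braiding operator `(G, mul, e, r)`. -/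
structure IsGrpTwist {G : Type*} (mul : G → G → G) (e : G)
    (r F : (G × G) ≃ (G × G)) (Φ Ψ : (G × G × G) ≃ (G × G × G)) : Prop where
  t1 : ∀ p, E12 F (Ψ p) = E23 F (Φ p)
  t2 : ∀ p, Φ (E23 r p) = E23 r (Φ p)
  t3 : ∀ p, Ψ (E12 r p) = E12 r (Ψ p)
  g1a : ∀ x y, Ψ (x, y, e) = (x, y, e)
  g1b : ∀ x y, Φ (e, x, y) = (e, x, y)
  g2a : ∀ x, F (e, x) = (e, x)
  g2b : ∀ x, F (x, e) = (x, e)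
  g3 : ∀ p : G × G × G, M23 mul (Φ p) = F (M23 mul p)
  g4 : ∀ p : G × G × G, M12 mul (Ψ p) = F (M12 mul p)

/-- The twisted map `F ∘ r ∘ F⁻¹`. -/
def twisted {G : Type*} (r F : (G × G) ≃ (G × G)) : (G × G) ≃ (G × G) :=
  (F.symm.trans r).trans F

/-- The twisted multiplication `m ∘ F⁻¹`. -/
def twistMul {G : Type*} (mul : G → G → G) (F : (G × G) ≃ (G × G)) : G → G → G :=
  fun x y => mul (F.symm (x, y)).1 (F.symm (x, y)).2

section

variable {G : Type*} {mul : G → G → G} {e : G} {inv : G → G}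
  {r F : (G × G) ≃ (G × G)} {Φ Ψ : (G × G × G) ≃ (G × G × G)}

theorem twistMul_apply (p : G × G) :
    twistMul mul F (F p).1 (F p).2 = mul p.1 p.2 := by
  simp [twistMul]

namespace IsGrpTwist

theorem one_twistMul (ht : IsGrpTwist mul e r F Φ Ψ) (hG : IsGroup mul e inv) (a : G) :
    twistMul mul F e a = a := by
  have h := twistMul_apply (mul := mul) (F := F) (e, a)
  rwa [ht.g2a, hG.one_mul] at h

theorem twistMul_one (ht : IsGrpTwist mul e r F Φ Ψ) (hG : IsGroup mul e inv) (a : G) :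
    twistMul mul F a e = a := by
  have h := twistMul_apply (mul := mul) (F := F) (a, e)
  rwa [ht.g2b, hG.mul_one] at h

/-- Multiplying the first two factors of `F₁₂ ∘ Ψ` gives `F ∘ m₁₂`. -/
theorem M12_twistMul (ht : IsGrpTwist mul e r F Φ Ψ) (p : G × G × G) :
    M12 (twistMul mul F) (E12 F (Ψ p)) = F (M12 mul p) := by
  rw [← ht.g4]
  exact Prod.ext (twistMul_apply ((Ψ p).1, (Ψ p).2.1)) rfl

/-- Multiplying the last two factors of `F₁₂ ∘ Ψ = F₂₃ ∘ Φ` gives `F ∘ m₂₃`. -/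
theorem M23_twistMul (ht : IsGrpTwist mul e r F Φ Ψ) (p : G × G × G) :
    M23 (twistMul mul F) (E12 F (Ψ p)) = F (M23 mul p) := by
  rw [ht.t1, ← ht.g3]
  exact Prod.ext rfl (twistMul_apply (Φ p).2)

theorem twistMul_assoc (ht : IsGrpTwist mul e r F Φ Ψ) (hG : IsGroup mul e inv) (a b c : G) :
    twistMul mul F (twistMul mul F a b) c = twistMul mul F a (twistMul mul F b c) := by
  obtain ⟨p, hp⟩ := (Ψ.trans (E12 F)).surjective (a, b, c)
  have h₁ := ht.M12_twistMul p
  have h₂ := ht.M23_twistMul p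
  rw [Equiv.trans_apply] at hp
  rw [hp] at h₁ h₂
  have k₁ := twistMul_apply (mul := mul) (F := F) (M12 mul p)
  have k₂ := twistMul_apply (mul := mul) (F := F) (M23 mul p)
  rw [← h₁] at k₁
  rw [← h₂] at k₂
  exact k₁.trans ((hG.mul_assoc _ _ _).trans k₂.symm)

theorem exists_twistMul_inverse (ht : IsGrpTwist mul e r F Φ Ψ) (hG : IsGroup mul e inv)
    (a : G) : ∃ b, twistMul mul F a b = e ∧ twistMul mul F b a = e := by
  have h₁ := ht.M12_twistMul (a, inv a, a)
  have h₂ := ht.M23_twistMul (a, inv a, a)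
  simp only [M12, M23, hG.mul_inv, hG.inv_mul, ht.g2a, ht.g2b, Prod.mk.injEq] at h₁ h₂
  refine ⟨(E12 F (Ψ (a, inv a, a))).2.1, ?_, ?_⟩
  · rw [← h₁.1, h₂.1]
  · rw [← h₂.2, h₁.2]

/-- The map `x ↦ F(x, x⁻¹)₁` is bijective. -/
theorem bijective_fst_apply_inv (ht : IsGrpTwist mul e r F Φ Ψ) (hG : IsGroup mul e inv) :
    Function.Bijective fun x => (F (x, inv x)).1 := by
  have key : ∀ x, twistMul mul F (F (x, inv x)).1 (F (x, inv x)).2 = e := fun x => by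
    rw [twistMul_apply, hG.mul_inv]
  constructor
  · intro x y hxy
    obtain ⟨b, -, hb⟩ := ht.exists_twistMul_inverse hG (F (x, inv x)).1
    have snd_eq : ∀ q, twistMul mul F (F (x, inv x)).1 q = e → q = b := fun q hq => by
      rw [← ht.one_twistMul hG q, ← hb, ht.twistMul_assoc hG, hq, ht.twistMul_one hG]
    have hy := key y
    have hxy' : (F (x, inv x)).1 = (F (y, inv y)).1 := hxy
    rw [← hxy'] at hy
    have hF : F (x, inv x) = F (y, inv y) :=
      Prod.ext hxy' ((snd_eq _ (key x)).trans (snd_eq _ hy).symm)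
    exact congrArg Prod.fst (F.injective hF)
  · intro a
    obtain ⟨b, hb, -⟩ := ht.exists_twistMul_inverse hG a
    obtain ⟨⟨x, y⟩, hp⟩ := F.surjective (a, b)
    have hxy := twistMul_apply (mul := mul) (F := F) (x, y)
    rw [hp, hb] at hxy
    have hy : y = inv x := by
      rw [← hG.one_mul y, ← hG.inv_mul x, hG.mul_assoc, ← hxy, hG.mul_one]
    refine ⟨x, ?_⟩
    simp only [← hy, hp]

/-- `F₁₂ ∘ Ψ` intertwines `r₁₂` with the twisted braiding operator on the first two factors. -/
theorem E12_comp_braiding (ht : IsGrpTwist mul e r F Φ Ψ) (p : G × G × G) :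
    E12 F (Ψ (E12 r p)) = E12 (twisted r F) (E12 F (Ψ p)) := by
  rw [ht.t3]
  simp [E12, twisted]

end IsGrpTwist

end

theorem twisted_additive_group_isomorphic {G : Type*} (mul : G → G → G) (e : G)
    (inv : G → G) (hG : IsGroup mul e inv)
    (r F : (G × G) ≃ (G × G)) (Φ Ψ : (G × G × G) ≃ (G × G × G))
    (σ γ τ σ' γ' τ' : G → G → G)
    (hbr : IsBraidingOp mul e r)
    (hr : ∀ x y, r (x, y) = (σ x y, γ y x))
    (hτ : ∀ x, Function.LeftInverse (τ x) (σ x) ∧ Function.RightInverse (τ x) (σ x))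
    (ht : IsGrpTwist mul e r F Φ Ψ)
    (hr' : ∀ x y, twisted r F (x, y) = (σ' x y, γ' y x))
    (hτ' : ∀ x, Function.LeftInverse (τ' x) (σ' x) ∧ Function.RightInverse (τ' x) (σ' x)) :
    ∃ f : G → G, Function.Bijective f ∧
      ∀ x y, f (mul x (τ x y)) = twistMul mul F (f x) (τ' (f x) (f y)) := by
  refine ⟨fun x => (F (x, inv x)).1, ht.bijective_fst_apply_inv hG, fun x z => ?_⟩
  obtain ⟨y, rfl⟩ : ∃ y, σ x y = z := ⟨τ x z, (hτ x).2 z⟩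
  rw [(hτ x).1 y]
  -- Compare `F₁₂ ∘ Ψ` on `(x, y, (xy)⁻¹)` and on its image under `r₁₂`.
  have fst_eq : ∀ a b, mul a b = mul x y →
      (E12 F (Ψ (a, b, inv (mul x y)))).1 = (F (a, inv a)).1 := fun a b hab => by
    have hb : mul b (inv (mul x y)) = inv a := by
      rw [← hG.one_mul (mul b _), ← hG.inv_mul a, hG.mul_assoc, ← hG.mul_assoc a, hab,
        hG.mul_inv, hG.mul_one]
    have h := congrArg Prod.fst (ht.M23_twistMul (a, b, inv (mul x y)))
    simpa only [M23, hb] using h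
  have hprod := congrArg Prod.fst (ht.M12_twistMul (x, y, inv (mul x y)))
  have hσγ : mul (σ x y) (γ y x) = mul x y := by
    simpa only [hr] using hbr.mul_r (x, y)
  have hbraid := congrArg Prod.fst (ht.E12_comp_braiding (x, y, inv (mul x y)))
  have hE : E12 r (x, y, inv (mul x y)) = (σ x y, γ y x, inv (mul x y)) := by
    simp [E12, hr]
  rw [hE, fst_eq _ _ hσγ] at hbraid
  have hx := fst_eq x y rfl
  generalize E12 F (Ψ (x, y, inv (mul x y))) = t at hprod hbraid hx
  obtain ⟨u, v, w⟩ := t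
  have hσ' : (E12 (twisted r F) (u, v, w)).1 = σ' u v := by simp [E12, hr']
  simp only [M12] at hprod hx
  rw [hσ'] at hbraid
  simp only [hbraid, ← hx, (hτ' u).1 v, hprod]

end BraceTwist
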